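/- arXiv:1503.06982 — 2 statements merged into one kernel-verified Lean document; each statement's English description precedes it below -/
import Mathlib

section
/- (Classical form of Lemma 2, the primal Linear Operator Inequality.) Let a, b, c be polynomial functions with a(x) ≥ α > 0 on [0,1], let ε1 > 0, and let N, P1, P2 be polynomial functions with P2(x,ξ) = P1(ξ,x) and N(x) ≥ ε1 on [0,1]. Define the operator (Sw)(x) = N(x)w(x) + ∫₀^x P1(x,ξ)w(ξ)dξ + ∫_x^1 P2(x,ξ)w(ξ)dξ, and the functions Q0,…,Q8 by: Q0(x) = d/dx[d/dx(a(x)N(x)) − b(x)N(x)] + 2·[∂/∂x (a(x)(P1(x,ξ) − P2(x,ξ)))]evaluated at ξ = x + 2N(x)c(x) − (π²/2)αε1; Q1(x,ξ) = ∂/∂x[∂/∂x(a(x)P1(x,ξ)) − b(x)P1(x,ξ)] + ∂/∂ξ[∂/∂ξ(a(ξ)P1(x,ξ)) − b(ξ)P1(x,ξ)] + (c(x) + c(ξ))P1(x,ξ); Q2(x,ξ) = Q1(ξ,x); Q3 = (a'(0) − b(0))N(0) + a(0)N'(0) − (π²/2)αε1; Q4(x) = 2(a'(0) − b(0))P2(0,x)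 + 2a(0)·∂P2/∂x(0,x) + π²αε1; Q5 = (b(1) − a'(1))N(1) − a(1)N'(1); Q6(x) = 2(b(1) − a'(1))P1(1,x) − 2a(1)·∂P1/∂x(1,x); Q7 = 2a(1)N(1); Q8(x) = 2a(1)P1(1,x); and the operator (Qw)(x) = Q0(x)w(x) + ∫₀^x Q1(x,ξ)w(ξ)dξ + ∫_x^1 Q2(x,ξ)w(ξ)dξ. Then for every twice continuously differentiable w : [0,1] → ℝ with w'(0) = 0, we have 2∫₀¹ [a(x)w''(x) + b(x)w'(x) + c(x)w(x)]·(Sw)(x) dx ≤ ∫₀¹ (Qw)(x) w(x) dx + w(0)·(Q3·w(0) + ∫₀¹ Q4(x)w(x)dx) + w(1)·(Q5·w(1) + ∫₀¹ Q6(x)w(x)dx) + w'(1)·(Q7·w(1) + ∫₀¹ Q8(x)w(x)dx). -/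
open MeasureTheory Real

noncomputable section

/-- `f` is (the restriction of) a polynomial function. -/
def IsPolyFun (f : ℝ → ℝ) : Prop := ∃ p : Polynomial ℝ, ∀ x, f x = p.eval x

/-- `f` is (the restriction of) a polynomial function of two variables. -/
def IsPolyFun2 (f : ℝ → ℝ → ℝ) : Prop :=
  ∃ p : MvPolynomial (Fin 2) ℝ, ∀ x y, f x y = MvPolynomial.eval ![x, y] p

/-- The semi-separable kernel operator
`(Sw)(x) = N(x)w(x) + ∫₀ˣ P1(x,ξ)w(ξ)dξ + ∫ₓ¹ P2(x,ξ)w(ξ)dξ`. -/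
def semisepOp (N : ℝ → ℝ) (P1 P2 : ℝ → ℝ → ℝ) (w : ℝ → ℝ) : ℝ → ℝ :=
  fun x => N x * w x + (∫ ξ in (0:ℝ)..x, P1 x ξ * w ξ)
    + ∫ ξ in x..(1:ℝ), P2 x ξ * w ξ

def evv (p : MvPolynomial (Fin 2) ℝ) (x y : ℝ) : ℝ := MvPolynomial.eval ![x, y] p

lemma evv_add (p q x y) : evv (p + q) x y = evv p x y + evv q x y := by simp [evv]
lemma evv_sub (p q x y) : evv (p - q) x y = evv p x y - evv q x y := by simp [evv]
lemma evv_mul (p q x y) : evv (p * q) x y = evv p x y * evv q x y := by simp [evv]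

lemma evv_cont (p : MvPolynomial (Fin 2) ℝ) : Continuous (fun z : ℝ × ℝ => evv p z.1 z.2) := by
  unfold evv
  induction p using MvPolynomial.induction_on with
  | C r => simpa using continuous_const
  | add p q hp hq => simpa using Continuous.fun_add hp hq
  | mul_X p i hp =>
    fin_cases i
    · simpa using Continuous.fun_mul hp continuous_fst
    · simpa using Continuous.fun_mul hp continuous_snd

lemma evv_cont1 (p : MvPolynomial (Fin 2) ℝ) {f g : ℝ → ℝ} (hf : Continuous f)
    (hg : Continuous g) : Continuous (fun t => evv p (f t) (g t)) := by
  have h := evv_cont p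
  generalize evv p = F at h ⊢
  exact h.comp (hf.prodMk hg)

def DD (p : MvPolynomial (Fin 2) ℝ) : MvPolynomial (Fin 2) ℝ := MvPolynomial.pderiv 0 p

lemma evv_deriv (p : MvPolynomial (Fin 2) ℝ) (x y : ℝ) :
    HasDerivAt (fun t => evv p t y) (evv (DD p) x y) x := by
  unfold evv DD
  induction p using MvPolynomial.induction_on with
  | C r => simpa using hasDerivAt_const x r
  | add p q hp hq => simpa using HasDerivAt.fun_add hp hq
  | mul_X p i hp =>
    fin_cases i
    · have := HasDerivAt.fun_mul hp (hasDerivAt_id x)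
      simp [Derivation.leibniz, MvPolynomial.pderiv_X] at this ⊢
      refine this.congr_deriv ?_
      ring
    · have := hp.mul_const y
      simp [Derivation.leibniz, MvPolynomial.pderiv_X] at this ⊢
      refine this.congr_deriv ?_
      ring

lemma evv_int_deriv (p : MvPolynomial (Fin 2) ℝ) (c x : ℝ) : ∀ w : ℝ → ℝ, Continuous w →
    HasDerivAt (fun t => ∫ ξ in c..t, evv p t ξ * w ξ)
      (evv p x x * w x + ∫ ξ in c..x, evv (DD p) x ξ * w ξ) x := by
  induction p using MvPolynomial.induction_on with
  | C r =>
    intro w hw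
    have h := (intervalIntegral.integral_hasDerivAt_right (hw.intervalIntegrable c x)
      hw.stronglyMeasurable.stronglyMeasurableAtFilter hw.continuousAt).const_mul r
    simpa [evv, DD] using h
  | add p q hp hq =>
    intro w hw
    have h := (hp w hw).fun_add (hq w hw)
    have key : ∀ (p q : MvPolynomial (Fin 2) ℝ) (t : ℝ), ∫ ξ in c..t, evv (p + q) t ξ * w ξ
        = (∫ ξ in c..t, evv p t ξ * w ξ) + ∫ ξ in c..t, evv q t ξ * w ξ := by
      intro p q t
      rw [← intervalIntegral.integral_add]
      · congr 1; ext ξ; rw [evv_add]; ring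
      · exact ((evv_cont1 p continuous_const continuous_id).mul hw).intervalIntegrable _ _
      · exact ((evv_cont1 q continuous_const continuous_id).mul hw).intervalIntegrable _ _
    have hD : DD (p + q) = DD p + DD q := by simp [DD]
    rw [hD, key, evv_add]
    simp_rw [key]
    refine h.congr_deriv ?_
    ring
  | mul_X p i hp =>
    intro w hw
    fin_cases i
    · have h := (hasDerivAt_id x).fun_mul (hp w hw)
      have e0 : ∀ t ξ, evv (p * MvPolynomial.X 0) t ξ * w ξ = t * (evv p t ξ * w ξ) := by
        intro t ξ; simp [evv]; ring
      have e1 : ∀ t ξ, evv (DD (p * MvPolynomial.X 0)) t ξ * w ξ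
          = t * (evv (DD p) t ξ * w ξ) + evv p t ξ * w ξ := by
        intro t ξ; simp [evv, DD, Derivation.leibniz, MvPolynomial.pderiv_X]; ring
      simp only [Fin.zero_eta, Fin.isValue]
      simp_rw [e0, e1]
      rw [intervalIntegral.integral_add]
      · simp_rw [intervalIntegral.integral_const_mul]
        refine h.congr_deriv ?_
        simp [evv]; ring
      · exact (((evv_cont1 (DD p) continuous_const continuous_id).mul hw).const_smul x).intervalIntegrable _ _
      · exact ((evv_cont1 p continuous_const continuous_id).mul hw).intervalIntegrable _ _
    · have h := hp (fun ξ => ξ * w ξ) (continuous_id.mul hw)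
      have e0 : ∀ t ξ, evv (p * MvPolynomial.X 1) t ξ * w ξ = (evv p t ξ * (ξ * w ξ)) := by
        intro t ξ; simp [evv]; ring
      have e1 : ∀ t ξ, evv (DD (p * MvPolynomial.X 1)) t ξ * w ξ
          = (evv (DD p) t ξ * (ξ * w ξ)) := by
        intro t ξ; simp [evv, DD, Derivation.leibniz, MvPolynomial.pderiv_X]; ring
      simp only [Fin.mk_one, Fin.isValue]
      simp_rw [e0, e1]
      exact h

lemma evv_int_deriv' (p : MvPolynomial (Fin 2) ℝ) (c x : ℝ) (w : ℝ → ℝ) (hw : Continuous w) :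
    HasDerivAt (fun t => ∫ ξ in t..c, evv p t ξ * w ξ)
      (-(evv p x x * w x) + ∫ ξ in x..c, evv (DD p) x ξ * w ξ) x := by
  have h := (evv_int_deriv p c x w hw).neg
  have e : (fun t => ∫ ξ in t..c, evv p t ξ * w ξ) = -(fun t => ∫ ξ in c..t, evv p t ξ * w ξ) := by
    ext t; simp only [Pi.neg_apply]; rw [intervalIntegral.integral_symm]
  rw [e, intervalIntegral.integral_symm]
  refine h.congr_deriv ?_
  ring

lemma cont_I (p : MvPolynomial (Fin 2) ℝ) (c : ℝ) (w : ℝ → ℝ) (hw : Continuous w) :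
    Continuous (fun t => ∫ ξ in c..t, evv p t ξ * w ξ) :=
  continuous_iff_continuousAt.2 fun x => (evv_int_deriv p c x w hw).continuousAt

lemma cont_J (p : MvPolynomial (Fin 2) ℝ) (c : ℝ) (w : ℝ → ℝ) (hw : Continuous w) :
    Continuous (fun t => ∫ ξ in t..c, evv p t ξ * w ξ) :=
  continuous_iff_continuousAt.2 fun x => (evv_int_deriv' p c x w hw).continuousAt

/-- Fubini on the triangle. -/
lemma tri_swap (F : ℝ → ℝ → ℝ) (hF : Continuous (fun z : ℝ × ℝ => F z.1 z.2)) :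
    ∫ x in (0:ℝ)..1, ∫ ξ in (0:ℝ)..x, F x ξ = ∫ x in (0:ℝ)..1, ∫ ξ in x..(1:ℝ), F ξ x := by
  have hint : IntegrableOn (fun z : ℝ × ℝ => F z.1 z.2) (Set.Ioc 0 1 ×ˢ Set.Ioc 0 1)
      (volume.prod volume) :=
    (hF.continuousOn.integrableOn_compact (isCompact_Icc.prod isCompact_Icc)).mono_set
      (Set.prod_mono Set.Ioc_subset_Icc_self Set.Ioc_subset_Icc_self)
  have hmeas : MeasurableSet {z : ℝ × ℝ | z.2 ≤ z.1} :=
    measurableSet_le measurable_snd measurable_fst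
  have h2 : Integrable (Function.uncurry fun x ξ : ℝ => Set.indicator {z : ℝ × ℝ | z.2 ≤ z.1}
      (fun z : ℝ × ℝ => F z.1 z.2) (x, ξ))
      ((volume.restrict (Set.Ioc 0 1)).prod (volume.restrict (Set.Ioc 0 1))) := by
    rw [Measure.prod_restrict]
    exact Integrable.indicator hint hmeas
  have h3 := integral_integral_swap h2
  rw [intervalIntegral.integral_of_le zero_le_one, intervalIntegral.integral_of_le zero_le_one]
  have e1 : ∫ x in Set.Ioc (0:ℝ) 1, ∫ ξ in (0:ℝ)..x, F x ξ = ∫ x in Set.Ioc (0:ℝ) 1,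
      ∫ ξ in Set.Ioc (0:ℝ) 1, Set.indicator {z : ℝ × ℝ | z.2 ≤ z.1}
      (fun z : ℝ × ℝ => F z.1 z.2) (x, ξ) := by
    refine setIntegral_congr_fun measurableSet_Ioc fun x hx => ?_
    rw [intervalIntegral.integral_of_le hx.1.le]
    have : (fun ξ => Set.indicator {z : ℝ × ℝ | z.2 ≤ z.1}
      (fun z : ℝ × ℝ => F z.1 z.2) (x, ξ)) = Set.indicator (Set.Iic x) (fun ξ => F x ξ) := by
      ext ξ; simp [Set.indicator]
    rw [this, setIntegral_indicator measurableSet_Iic]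
    congr 2
    ext ξ; simp only [Set.mem_Ioc, Set.mem_inter_iff, Set.mem_Iic]
    constructor
    · rintro ⟨h, h'⟩; exact ⟨⟨h, h'.trans hx.2⟩, h'⟩
    · rintro ⟨⟨h, _⟩, h'⟩; exact ⟨h, h'⟩
  have e2 : ∫ x in Set.Ioc (0:ℝ) 1, ∫ ξ in x..(1:ℝ), F ξ x = ∫ ξ in Set.Ioc (0:ℝ) 1,
      ∫ x in Set.Ioc (0:ℝ) 1, Set.indicator {z : ℝ × ℝ | z.2 ≤ z.1}
      (fun z : ℝ × ℝ => F z.1 z.2) (x, ξ) := by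
    refine setIntegral_congr_fun measurableSet_Ioc fun x hx => ?_
    rw [intervalIntegral.integral_of_le hx.2, ← integral_Icc_eq_integral_Ioc]
    have : (fun ξ => Set.indicator {z : ℝ × ℝ | z.2 ≤ z.1}
      (fun z : ℝ × ℝ => F z.1 z.2) (ξ, x)) = Set.indicator (Set.Ici x) (fun ξ => F ξ x) := by
      ext ξ; simp [Set.indicator]
    rw [this, setIntegral_indicator measurableSet_Ici]
    congr 2
    ext ξ; simp only [Set.mem_Ioc, Set.mem_inter_iff, Set.mem_Ici, Set.mem_Icc]
    constructor
    · rintro ⟨h, h'⟩; exact ⟨⟨hx.1.trans_le h, h'⟩, h⟩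
    · rintro ⟨⟨_, h⟩, h'⟩; exact ⟨h', h⟩
  rw [e1, e2, h3]

lemma wirtinger_aux (f f' : ℝ → ℝ) (hf : ∀ x, HasDerivAt f (f' x) x) (hf' : Continuous f')
    (h0 : f 0 = 0) (δ : ℝ) (hδ : 0 < δ) (hδ2 : δ < π / 2) :
    (π / 2 - δ) ^ 2 * ∫ x in (0:ℝ)..1, f x ^ 2 ≤ ∫ x in (0:ℝ)..1, f' x ^ 2 := by
  set k := π / 2 - δ with hk
  have hk0 : 0 < k := by linarith
  have hfc : Continuous f := continuous_iff_continuousAt.2 fun x => (hf x).continuousAt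
  have hs : ∀ x ∈ Set.Icc (0:ℝ) 1, 0 < sin (k * x + δ) := by
    intro x hx
    apply sin_pos_of_pos_of_lt_pi
    · have := mul_nonneg hk0.le hx.1; linarith
    · have := mul_le_mul_of_nonneg_left hx.2 hk0.le; linarith [pi_pos]
  set φ : ℝ → ℝ := fun x => k * (cos (k * x + δ) / sin (k * x + δ)) with hφ
  have hφc : ContinuousOn φ (Set.Icc 0 1) := by
    apply ContinuousOn.mul continuousOn_const
    apply ContinuousOn.div
    · fun_prop
    · fun_prop
    · intro x hx; exact (hs x hx).ne'
  have hφd : ∀ x ∈ Set.Icc (0:ℝ) 1, HasDerivAt φ (-k ^ 2 - φ x ^ 2) x := by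
    intro x hx
    have hl : HasDerivAt (fun x => k * x + δ) k x := by
      simpa using ((hasDerivAt_id x).const_mul k).add_const δ
    have := ((hl.cos).div (hl.sin) (hs x hx).ne').const_mul k
    refine this.congr_deriv ?_
    have := (hs x hx).ne'
    simp only [hφ]
    field_simp
  have hI : Set.uIcc (0:ℝ) 1 = Set.Icc 0 1 := Set.uIcc_of_le zero_le_one
  have hftc : ∫ x in (0:ℝ)..1, (2 * φ x * f x * f' x + (-k ^ 2 - φ x ^ 2) * f x ^ 2)
      = φ 1 * f 1 ^ 2 - φ 0 * f 0 ^ 2 := by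
    apply intervalIntegral.integral_eq_sub_of_hasDerivAt (f := fun x => φ x * f x ^ 2)
    · intro x hx
      rw [hI] at hx
      have := (hφd x hx).mul ((hf x).pow 2)
      refine this.congr_deriv ?_
      simp; ring
    · apply ContinuousOn.intervalIntegrable
      rw [hI]
      fun_prop
  have hφ1 : φ 1 = 0 := by
    simp [hφ, hk]
  rw [hφ1, h0] at hftc
  have hsq : 0 ≤ ∫ x in (0:ℝ)..1, (f' x - φ x * f x) ^ 2 :=
    intervalIntegral.integral_nonneg zero_le_one fun x _ => sq_nonneg _
  have e : ∫ x in (0:ℝ)..1, (f' x - φ x * f x) ^ 2 = (∫ x in (0:ℝ)..1, f' x ^ 2)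
      - k ^ 2 * (∫ x in (0:ℝ)..1, f x ^ 2)
      - ∫ x in (0:ℝ)..1, (2 * φ x * f x * f' x + (-k ^ 2 - φ x ^ 2) * f x ^ 2) := by
    rw [← intervalIntegral.integral_const_mul, ← intervalIntegral.integral_sub,
      ← intervalIntegral.integral_sub]
    · congr 1; ext x; ring
    · apply Continuous.intervalIntegrable; fun_prop
    · apply ContinuousOn.intervalIntegrable
      rw [hI]
      fun_prop
    · apply Continuous.intervalIntegrable; fun_prop
    · apply Continuous.intervalIntegrable; fun_prop
  rw [hftc] at e
  linarith

lemma wirtinger (f f' : ℝ → ℝ) (hf : ∀ x, HasDerivAt f (f' x) x) (hf' : Continuous f')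
    (h0 : f 0 = 0) :
    (π / 2) ^ 2 * ∫ x in (0:ℝ)..1, f x ^ 2 ≤ ∫ x in (0:ℝ)..1, f' x ^ 2 := by
  have ht : Filter.Tendsto (fun δ : ℝ => (π / 2 - δ) ^ 2 * ∫ x in (0:ℝ)..1, f x ^ 2)
      (nhdsWithin 0 (Set.Ioi 0)) (nhds ((π / 2 - 0) ^ 2 * ∫ x in (0:ℝ)..1, f x ^ 2)) := by
    apply Filter.Tendsto.mono_left _ nhdsWithin_le_nhds
    apply Continuous.tendsto
    fun_prop
  rw [sub_zero] at ht
  refine le_of_tendsto ht ?_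
  filter_upwards [Ioo_mem_nhdsGT (show (0:ℝ) < π / 2 by positivity)] with δ hδ
  exact wirtinger_aux f f' hf hf' h0 δ hδ.1 hδ.2

def lft (p : Polynomial ℝ) : MvPolynomial (Fin 2) ℝ := Polynomial.aeval (MvPolynomial.X 0) p

lemma evv_lft (p : Polynomial ℝ) (x y : ℝ) : evv (lft p) x y = p.eval x := by
  unfold evv lft
  induction p using Polynomial.induction_on' with
  | add p q hp hq => simp [hp, hq]
  | monomial n r => simp [Polynomial.aeval_monomial]

lemma evv_d1 (pa : Polynomial ℝ) (p) (t ξ : ℝ) :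
    deriv (fun s => pa.eval s * evv p s ξ) t = evv (DD (lft pa * p)) t ξ := by
  have := evv_deriv (lft pa * p) t ξ
  simp only [evv_mul, evv_lft] at this
  exact this.deriv

lemma evv_d2 (pa pb : Polynomial ℝ) (p) (x ξ : ℝ) :
    deriv (fun t => deriv (fun s => pa.eval s * evv p s ξ) t - pb.eval t * evv p t ξ) x
      = evv (DD (DD (lft pa * p))) x ξ - evv (DD (lft pb * p)) x ξ := by
  have h := (evv_deriv (DD (lft pa * p)) x ξ).fun_sub (evv_deriv (lft pb * p) x ξ)
  simp only [evv_mul, evv_lft] at h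
  simp only [evv_d1]
  exact h.deriv

lemma evv_D1 (pa : Polynomial ℝ) (p) (t ξ : ℝ) :
    evv (DD (lft pa * p)) t ξ
      = pa.derivative.eval t * evv p t ξ + pa.eval t * evv (DD p) t ξ := by
  rw [← evv_d1]
  exact ((pa.hasDerivAt t).mul (evv_deriv p t ξ)).deriv

def LL (pa pb pc : Polynomial ℝ) (p : MvPolynomial (Fin 2) ℝ) : MvPolynomial (Fin 2) ℝ :=
  DD (DD (lft pa * p)) - DD (lft pb * p) + lft pc * p

/-- the kernel part of the operator -/
def KK (p1 p2 : MvPolynomial (Fin 2) ℝ) (w : ℝ → ℝ) (x : ℝ) : ℝ :=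
  (∫ ξ in (0:ℝ)..x, evv p1 x ξ * w ξ) + ∫ ξ in x..(1:ℝ), evv p2 x ξ * w ξ

lemma KK_cont (p1 p2) (w : ℝ → ℝ) (hw : Continuous w) : Continuous (KK p1 p2 w) :=
  Continuous.add (cont_I p1 0 w hw) (cont_J p2 1 w hw)

lemma KK_deriv (p1 p2) (w : ℝ → ℝ) (hw : Continuous w) (x : ℝ) :
    HasDerivAt (KK p1 p2 w) ((evv p1 x x - evv p2 x x) * w x + KK (DD p1) (DD p2) w x) x := by
  have h := (evv_int_deriv p1 0 x w hw).fun_add (evv_int_deriv' p2 1 x w hw)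
  refine h.congr_deriv ?_
  unfold KK
  ring

lemma evv_ii (p) (w : ℝ → ℝ) (hw : Continuous w) (x c d : ℝ) :
    IntervalIntegrable (fun ξ => evv p x ξ * w ξ) volume c d :=
  ((evv_cont1 p continuous_const continuous_id).mul hw).intervalIntegrable _ _

lemma KK_lft (pa : Polynomial ℝ) (p1 p2) (w : ℝ → ℝ) (x : ℝ) :
    KK (lft pa * p1) (lft pa * p2) w x = pa.eval x * KK p1 p2 w x := by
  unfold KK
  rw [mul_add, ← intervalIntegral.integral_const_mul, ← intervalIntegral.integral_const_mul]
  simp only [evv_mul, evv_lft, mul_assoc]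

lemma KK_add (p1 p2 q1 q2) (w : ℝ → ℝ) (hw : Continuous w) (x : ℝ) :
    KK (p1 + q1) (p2 + q2) w x = KK p1 p2 w x + KK q1 q2 w x := by
  unfold KK
  simp only [evv_add, add_mul]
  rw [intervalIntegral.integral_add (evv_ii _ _ hw _ _ _) (evv_ii _ _ hw _ _ _),
    intervalIntegral.integral_add (evv_ii _ _ hw _ _ _) (evv_ii _ _ hw _ _ _)]
  ring

lemma KK_sub (p1 p2 q1 q2) (w : ℝ → ℝ) (hw : Continuous w) (x : ℝ) :
    KK (p1 - q1) (p2 - q2) w x = KK p1 p2 w x - KK q1 q2 w x := by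
  unfold KK
  simp only [evv_sub, sub_mul]
  rw [intervalIntegral.integral_sub (evv_ii _ _ hw _ _ _) (evv_ii _ _ hw _ _ _),
    intervalIntegral.integral_sub (evv_ii _ _ hw _ _ _) (evv_ii _ _ hw _ _ _)]
  ring

lemma KK_LL (pa pb pc) (p1 p2) (w : ℝ → ℝ) (hw : Continuous w) (x : ℝ) :
    KK (LL pa pb pc p1) (LL pa pb pc p2) w x = KK (DD (DD (lft pa * p1))) (DD (DD (lft pa * p2))) w x
      - KK (DD (lft pb * p1)) (DD (lft pb * p2)) w x + pc.eval x * KK p1 p2 w x := by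
  unfold LL
  rw [KK_add _ _ _ _ _ hw, KK_sub _ _ _ _ _ hw, KK_lft]

lemma tri_swap_evv (p) (w : ℝ → ℝ) (hw : Continuous w) :
    ∫ x in (0:ℝ)..1, (∫ ξ in (0:ℝ)..x, evv p x ξ * w ξ) * w x
      = ∫ x in (0:ℝ)..1, (∫ ξ in x..(1:ℝ), evv p ξ x * w ξ) * w x := by
  have hc := evv_cont p
  have h := tri_swap (fun x ξ => evv p x ξ * w ξ * w x) (by
    have := (hc.mul (hw.comp continuous_snd)).mul (hw.comp continuous_fst)
    exact this)
  simp only [← intervalIntegral.integral_mul_const]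
  rw [h]
  congr 1; ext x; congr 1; ext ξ; ring

lemma tri_swap_evv' (p) (w : ℝ → ℝ) (hw : Continuous w) :
    ∫ x in (0:ℝ)..1, (∫ ξ in x..(1:ℝ), evv p x ξ * w ξ) * w x
      = ∫ x in (0:ℝ)..1, (∫ ξ in (0:ℝ)..x, evv p ξ x * w ξ) * w x := by
  have hc := evv_cont p
  have h := tri_swap (fun x ξ => evv p ξ x * w ξ * w x) (by
    have := ((hc.comp continuous_swap).mul (hw.comp continuous_snd)).mul (hw.comp continuous_fst)
    exact this)
  simp only [← intervalIntegral.integral_mul_const]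
  rw [h]
  congr 1; ext x; congr 1; ext ξ; ring

def sw (p : MvPolynomial (Fin 2) ℝ) : MvPolynomial (Fin 2) ℝ :=
  MvPolynomial.rename (Equiv.swap (0 : Fin 2) 1) p

lemma evv_sw (p x y) : evv (sw p) x y = evv p y x := by
  unfold evv sw
  rw [MvPolynomial.eval_rename]
  congr 2
  ext i
  fin_cases i <;> simp

lemma KK_sym (l1 l2) (w : ℝ → ℝ) (hw : Continuous w) :
    ∫ x in (0:ℝ)..1, KK (l1 + sw l2) (sw l1 + l2) w x * w x
      = 2 * ∫ x in (0:ℝ)..1, KK l1 l2 w x * w x := by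
  have hI : ∀ q, IntervalIntegrable (fun x => (∫ ξ in (0:ℝ)..x, evv q x ξ * w ξ) * w x)
      volume 0 1 := fun q => ((cont_I q 0 w hw).mul hw).intervalIntegrable _ _
  have hJ : ∀ q, IntervalIntegrable (fun x => (∫ ξ in x..(1:ℝ), evv q x ξ * w ξ) * w x)
      volume 0 1 := fun q => ((cont_J q 1 w hw).mul hw).intervalIntegrable _ _
  have hK : ∀ p q, ∫ x in (0:ℝ)..1, KK p q w x * w x
      = (∫ x in (0:ℝ)..1, (∫ ξ in (0:ℝ)..x, evv p x ξ * w ξ) * w x)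
        + ∫ x in (0:ℝ)..1, (∫ ξ in x..(1:ℝ), evv q x ξ * w ξ) * w x := by
    intro p q
    rw [← intervalIntegral.integral_add (hI p) (hJ q)]
    simp only [KK, add_mul]
  have hKi : ∀ p q, IntervalIntegrable (fun x => KK p q w x * w x) volume 0 1 :=
    fun p q => ((KK_cont p q w hw).mul hw).intervalIntegrable _ _
  have e : ∀ x, KK (l1 + sw l2) (sw l1 + l2) w x * w x
      = KK l1 l2 w x * w x + KK (sw l2) (sw l1) w x * w x := by
    intro x
    rw [add_comm (sw l1) l2, KK_add _ _ _ _ _ hw]; ring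
  simp_rw [e]
  rw [intervalIntegral.integral_add (hKi _ _) (hKi _ _), hK (sw l2), hK l1]
  simp_rw [evv_sw]
  rw [← tri_swap_evv l1 w hw, ← tri_swap_evv' l2 w hw]
  ring

/-- Classical form of Lemma 2 (the primal Linear Operator Inequality). -/
theorem primal_linear_operator_inequality
    (a b c : ℝ → ℝ) (α : ℝ) (hα : 0 < α)
    (ha : IsPolyFun a) (hb : IsPolyFun b) (hc : IsPolyFun c)
    (haα : ∀ x ∈ Set.Icc (0:ℝ) 1, α ≤ a x)
    (ε1 : ℝ) (hε1 : 0 < ε1)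
    (N : ℝ → ℝ) (P1 P2 : ℝ → ℝ → ℝ)
    (hNp : IsPolyFun N) (hP1p : IsPolyFun2 P1) (hP2p : IsPolyFun2 P2)
    (hsym : ∀ x ξ : ℝ, P2 x ξ = P1 ξ x)
    (hNε : ∀ x ∈ Set.Icc (0:ℝ) 1, ε1 ≤ N x)
    (Q0 Q4 Q6 Q8 : ℝ → ℝ) (Q1 Q2 : ℝ → ℝ → ℝ) (Q3 Q5 Q7 : ℝ)
    (hQ0 : ∀ x : ℝ, Q0 x =
      deriv (fun t => deriv (fun s => a s * N s) t - b t * N t) x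
        + 2 * deriv (fun t => a t * (P1 t x - P2 t x)) x
        + 2 * N x * c x - π ^ 2 / 2 * α * ε1)
    (hQ1 : ∀ x ξ : ℝ, Q1 x ξ =
      deriv (fun t => deriv (fun s => a s * P1 s ξ) t - b t * P1 t ξ) x
        + deriv (fun s => deriv (fun r => a r * P1 x r) s - b s * P1 x s) ξ
        + (c x + c ξ) * P1 x ξ)
    (hQ2 : ∀ x ξ : ℝ, Q2 x ξ = Q1 ξ x)
    (hQ3 : Q3 = (deriv a 0 - b 0) * N 0 + a 0 * deriv N 0 - π ^ 2 / 2 * α * ε1)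
    (hQ4 : ∀ x : ℝ, Q4 x = 2 * (deriv a 0 - b 0) * P2 0 x
        + 2 * a 0 * deriv (fun t => P2 t x) 0 + π ^ 2 * α * ε1)
    (hQ5 : Q5 = (b 1 - deriv a 1) * N 1 - a 1 * deriv N 1)
    (hQ6 : ∀ x : ℝ, Q6 x = 2 * (b 1 - deriv a 1) * P1 1 x
        - 2 * a 1 * deriv (fun t => P1 t x) 1)
    (hQ7 : Q7 = 2 * a 1 * N 1)
    (hQ8 : ∀ x : ℝ, Q8 x = 2 * a 1 * P1 1 x) :
    ∀ w : ℝ → ℝ, ContDiff ℝ 2 w → deriv w 0 = 0 →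
      2 * (∫ x in (0:ℝ)..1,
            (a x * iteratedDeriv 2 w x + b x * deriv w x + c x * w x)
              * semisepOp N P1 P2 w x)
        ≤ (∫ x in (0:ℝ)..1,
              (Q0 x * w x + (∫ ξ in (0:ℝ)..x, Q1 x ξ * w ξ)
                + ∫ ξ in x..(1:ℝ), Q2 x ξ * w ξ) * w x)
          + w 0 * (Q3 * w 0 + ∫ x in (0:ℝ)..1, Q4 x * w x)
          + w 1 * (Q5 * w 1 + ∫ x in (0:ℝ)..1, Q6 x * w x)
          + deriv w 1 * (Q7 * w 1 + ∫ x in (0:ℝ)..1, Q8 x * w x) := by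
  intro w hw hw0
  obtain ⟨pa, hpa⟩ := ha
  obtain ⟨pb, hpb⟩ := hb
  obtain ⟨pc, hpc⟩ := hc
  obtain ⟨pN, hpN⟩ := hNp
  obtain ⟨p1, hp1⟩ := hP1p
  obtain ⟨p2, hp2⟩ := hP2p
  obtain rfl : a = fun x => pa.eval x := funext hpa
  obtain rfl : b = fun x => pb.eval x := funext hpb
  obtain rfl : c = fun x => pc.eval x := funext hpc
  obtain rfl : N = fun x => pN.eval x := funext hpN
  obtain rfl : P1 = fun x y => evv p1 x y := funext fun x => funext fun y => hp1 x y
  obtain rfl : P2 = fun x y => evv p2 x y := funext fun x => funext fun y => hp2 x y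
  clear hpa hpb hpc hpN hp1 hp2
  simp only at *
  have hwc : Continuous w := hw.continuous
  have hd1 : ∀ x, HasDerivAt w (deriv w x) x := fun x =>
    (hw.differentiable (by norm_num) x).hasDerivAt
  have hw1 : ContDiff ℝ 1 (deriv w) := by
    have h2 : ContDiff ℝ (1 + 1) w := by simpa [one_add_one_eq_two] using hw
    exact (contDiff_succ_iff_deriv.1 h2).2.2
  have hd2 : ∀ x, HasDerivAt (deriv w) (iteratedDeriv 2 w x) x := by
    intro x
    have := (hw1.differentiable (by norm_num) x).hasDerivAt
    rwa [show iteratedDeriv 2 w x = deriv (deriv w) x by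
      rw [iteratedDeriv_succ, iteratedDeriv_one]]
  have hc1 : Continuous (deriv w) := hw1.continuous
  have hc2 : Continuous (iteratedDeriv 2 w) := hw.continuous_iteratedDeriv 2 le_rfl
  set w' := deriv w with hw'
  set w'' := iteratedDeriv 2 w with hw''
  -- names
  set K := KK p1 p2 w with hK
  set Ma := pa * pN with hMa
  set R := pb * pN with hR
  set V1 := KK (DD (lft pa * p1)) (DD (lft pa * p2)) w with hV1
  set V2 := KK (DD (DD (lft pa * p1))) (DD (DD (lft pa * p2))) w with hV2
  set U1 := KK (DD (lft pb * p1)) (DD (lft pb * p2)) w with hU1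
  set T := KK (LL pa pb pc p1) (LL pa pb pc p2) w with hT
  have hdiag : ∀ x, evv p1 x x = evv p2 x x := fun x => (hsym x x).symm
  have hKc : Continuous K := KK_cont _ _ _ hwc
  have hV1c : Continuous V1 := KK_cont _ _ _ hwc
  have hV2c : Continuous V2 := KK_cont _ _ _ hwc
  have hU1c : Continuous U1 := KK_cont _ _ _ hwc
  have hTc : Continuous T := KK_cont _ _ _ hwc
  have hTe : ∀ x, T x = V2 x - U1 x + pc.eval x * K x := fun x => KK_LL pa pb pc p1 p2 w hwc x
  have dV : ∀ x, HasDerivAt (fun x => pa.eval x * K x) (V1 x) x := by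
    intro x
    have h := KK_deriv (lft pa * p1) (lft pa * p2) w hwc x
    rw [show KK (lft pa * p1) (lft pa * p2) w = fun x => pa.eval x * K x from
      funext fun x => KK_lft _ _ _ _ _] at h
    refine h.congr_deriv ?_
    simp [evv_mul, hdiag, hV1]
  have dU : ∀ x, HasDerivAt (fun x => pb.eval x * K x) (U1 x) x := by
    intro x
    have h := KK_deriv (lft pb * p1) (lft pb * p2) w hwc x
    rw [show KK (lft pb * p1) (lft pb * p2) w = fun x => pb.eval x * K x from
      funext fun x => KK_lft _ _ _ _ _] at h
    refine h.congr_deriv ?_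
    simp [evv_mul, hdiag, hU1]
  set jd : ℝ → ℝ := fun x => evv (DD (lft pa * p1)) x x - evv (DD (lft pa * p2)) x x with hjd
  have hjc : Continuous jd :=
    (evv_cont1 _ continuous_id continuous_id).sub (evv_cont1 _ continuous_id continuous_id)
  have dV1 : ∀ x, HasDerivAt V1 (jd x * w x + V2 x) x := fun x => KK_deriv _ _ w hwc x
  -- the Q's
  have hQ0' : ∀ x, Q0 x = Ma.derivative.derivative.eval x - R.derivative.eval x + 2 * jd x
      + 2 * pN.eval x * pc.eval x - π ^ 2 / 2 * α * ε1 := by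
    intro x
    rw [hQ0]
    have e1 : deriv (fun t => deriv (fun s => pa.eval s * pN.eval s) t - pb.eval t * pN.eval t) x
        = Ma.derivative.derivative.eval x - R.derivative.eval x := by
      simp_rw [← Polynomial.eval_mul]
      simp only [Polynomial.deriv]
      exact ((Ma.derivative.hasDerivAt x).sub (R.hasDerivAt x)).deriv
    have e2 : deriv (fun t => pa.eval t * (evv p1 t x - evv p2 t x)) x = jd x := by
      have h := (evv_deriv (lft pa * p1) x x).fun_sub (evv_deriv (lft pa * p2) x x)
      simp only [evv_mul, evv_lft, ← mul_sub] at h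
      exact h.deriv
    rw [e1, e2]
  have hQ1' : ∀ x ξ, Q1 x ξ = evv (LL pa pb pc p1 + sw (LL pa pb pc p2)) x ξ := by
    intro x ξ
    rw [hQ1, evv_d2]
    simp_rw [← hsym]
    rw [evv_d2, evv_add, evv_sw]
    unfold LL
    simp only [evv_add, evv_sub, evv_mul, evv_lft, hsym]
    ring
  have hQ2' : ∀ x ξ, Q2 x ξ = evv (sw (LL pa pb pc p1) + LL pa pb pc p2) x ξ := by
    intro x ξ
    rw [hQ2, hQ1']
    simp only [evv_add, evv_sw]
  have hQint : ∫ x in (0:ℝ)..1, (Q0 x * w x + (∫ ξ in (0:ℝ)..x, Q1 x ξ * w ξ)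
                + ∫ ξ in x..(1:ℝ), Q2 x ξ * w ξ) * w x
      = (∫ x in (0:ℝ)..1, Q0 x * w x ^ 2) + 2 * ∫ x in (0:ℝ)..1, T x * w x := by
    rw [hT, ← KK_sym _ _ w hwc, ← intervalIntegral.integral_add]
    · congr 1; ext x
      simp only [hQ1', hQ2', KK]; ring
    · apply Continuous.intervalIntegrable
      simp_rw [hQ0']
      fun_prop
    · exact ((KK_cont _ _ w hwc).mul hwc).intervalIntegrable _ _
  have hS : ∀ x, semisepOp (fun x => pN.eval x) (fun x y => evv p1 x y) (fun x y => evv p2 x y) w x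
      = pN.eval x * w x + K x := by
    intro x; simp only [semisepOp, hK, KK]; ring
  simp_rw [hS]
  rw [hQint]
  -- the primitive
  set G : ℝ → ℝ := fun x => 2 * (Ma.eval x * (w x * w' x)) - Ma.derivative.eval x * w x ^ 2
    + R.eval x * w x ^ 2 + 2 * ((pa.eval x * K x) * w' x) - 2 * (V1 x * w x)
    + 2 * ((pb.eval x * K x) * w x) with hG
  have hGd : ∀ x, HasDerivAt G (2 * ((pa.eval x * w'' x + pb.eval x * w' x + pc.eval x * w x)
      * (pN.eval x * w x + K x)) + 2 * (Ma.eval x * w' x ^ 2)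
      - (Q0 x + π ^ 2 / 2 * α * ε1) * w x ^ 2 - 2 * (T x * w x)) x := by
    intro x
    have h := (((((((Ma.hasDerivAt x).fun_mul ((hd1 x).fun_mul (hd2 x))).const_mul 2).fun_sub
      ((Ma.derivative.hasDerivAt x).fun_mul ((hd1 x).fun_pow 2))).fun_add
      ((R.hasDerivAt x).fun_mul ((hd1 x).fun_pow 2))).fun_add
      (((dV x).fun_mul (hd2 x)).const_mul 2)).fun_sub
      (((dV1 x).fun_mul (hd1 x)).const_mul 2)).fun_add
      (((dU x).fun_mul (hd1 x)).const_mul 2)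
    refine h.congr_deriv ?_
    rw [hTe, hQ0']
    simp only [hMa, hR, Polynomial.eval_mul]
    push_cast
    ring
  have hQ0c : Continuous Q0 := by
    rw [show Q0 = _ from funext hQ0']
    fun_prop
  have hftc := intervalIntegral.integral_eq_sub_of_hasDerivAt (a := 0) (b := 1)
    (fun x _ => hGd x) (by apply Continuous.intervalIntegrable; fun_prop)
  have hsplit : ∫ x in (0:ℝ)..1, (2 * ((pa.eval x * w'' x + pb.eval x * w' x + pc.eval x * w x)
      * (pN.eval x * w x + K x)) + 2 * (Ma.eval x * w' x ^ 2)
      - (Q0 x + π ^ 2 / 2 * α * ε1) * w x ^ 2 - 2 * (T x * w x))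
      = 2 * (∫ x in (0:ℝ)..1, (pa.eval x * w'' x + pb.eval x * w' x + pc.eval x * w x)
      * (pN.eval x * w x + K x)) + 2 * (∫ x in (0:ℝ)..1, Ma.eval x * w' x ^ 2)
      - ((∫ x in (0:ℝ)..1, Q0 x * w x ^ 2) + π ^ 2 / 2 * α * ε1 * ∫ x in (0:ℝ)..1, w x ^ 2)
      - 2 * ∫ x in (0:ℝ)..1, T x * w x := by
    simp_rw [← intervalIntegral.integral_const_mul]
    rw [← intervalIntegral.integral_add, ← intervalIntegral.integral_add,
      ← intervalIntegral.integral_sub, ← intervalIntegral.integral_sub]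
    · congr 1; ext x; ring
    all_goals apply Continuous.intervalIntegrable; fun_prop
  rw [hsplit] at hftc
  -- Wirtinger
  have hwir := wirtinger (fun x => w x - w 0) w' (fun x => (hd1 x).sub_const _) hc1 (by simp)
  have hwsq : ∫ x in (0:ℝ)..1, (w x - w 0) ^ 2
      = (∫ x in (0:ℝ)..1, w x ^ 2) - 2 * w 0 * (∫ x in (0:ℝ)..1, w x) + w 0 ^ 2 := by
    have : ∫ x in (0:ℝ)..1, w 0 ^ 2 = w 0 ^ 2 := by simp
    conv_rhs => rw [← this]
    rw [← intervalIntegral.integral_const_mul, ← intervalIntegral.integral_sub,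
      ← intervalIntegral.integral_add]
    · congr 1; ext x; ring
    all_goals apply Continuous.intervalIntegrable; fun_prop
  have hlow : α * ε1 * ∫ x in (0:ℝ)..1, w' x ^ 2 ≤ ∫ x in (0:ℝ)..1, Ma.eval x * w' x ^ 2 := by
    rw [← intervalIntegral.integral_const_mul]
    apply intervalIntegral.integral_mono_on zero_le_one
    · apply Continuous.intervalIntegrable; fun_prop
    · apply Continuous.intervalIntegrable; fun_prop
    · intro x hx
      apply mul_le_mul_of_nonneg_right _ (sq_nonneg _)
      rw [hMa, Polynomial.eval_mul]
      exact mul_le_mul (haα x hx) (hNε x hx) hε1.le (hα.le.trans (haα x hx))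
  rw [hwsq] at hwir
  have hwir2 := mul_le_mul_of_nonneg_left hwir (mul_pos hα hε1).le
  -- boundary terms
  have hK0 : K 0 = ∫ x in (0:ℝ)..1, evv p2 0 x * w x := by simp [hK, KK]
  have hK1 : K 1 = ∫ x in (0:ℝ)..1, evv p1 1 x * w x := by simp [hK, KK]
  have hV0 : V1 0 = pa.derivative.eval 0 * K 0
      + pa.eval 0 * ∫ x in (0:ℝ)..1, evv (DD p2) 0 x * w x := by
    rw [hK0, ← intervalIntegral.integral_const_mul, ← intervalIntegral.integral_const_mul,
      ← intervalIntegral.integral_add ((evv_ii _ _ hwc _ _ _).const_mul _)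
        ((evv_ii _ _ hwc _ _ _).const_mul _)]
    simp only [hV1, KK, intervalIntegral.integral_same, zero_add, evv_D1]
    congr 1; ext x; ring
  have hV11 : V1 1 = pa.derivative.eval 1 * K 1
      + pa.eval 1 * ∫ x in (0:ℝ)..1, evv (DD p1) 1 x * w x := by
    rw [hK1, ← intervalIntegral.integral_const_mul, ← intervalIntegral.integral_const_mul,
      ← intervalIntegral.integral_add ((evv_ii _ _ hwc _ _ _).const_mul _)
        ((evv_ii _ _ hwc _ _ _).const_mul _)]
    simp only [hV1, KK, intervalIntegral.integral_same, add_zero, evv_D1]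
    congr 1; ext x; ring
  have hQ4i : ∫ x in (0:ℝ)..1, Q4 x * w x = 2 * (V1 0 - pb.eval 0 * K 0)
      + π ^ 2 * α * ε1 * ∫ x in (0:ℝ)..1, w x := by
    have : ∀ x, Q4 x * w x = 2 * (pa.derivative.eval 0 - pb.eval 0) * (evv p2 0 x * w x)
        + 2 * pa.eval 0 * (evv (DD p2) 0 x * w x) + π ^ 2 * α * ε1 * w x := by
      intro x
      rw [hQ4, (evv_deriv p2 0 x).deriv, Polynomial.deriv]; ring
    simp_rw [this]
    rw [intervalIntegral.integral_add (((evv_ii _ _ hwc _ _ _).const_mul _).add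
      ((evv_ii _ _ hwc _ _ _).const_mul _)) ((hwc.intervalIntegrable _ _).const_mul _),
      intervalIntegral.integral_add ((evv_ii _ _ hwc _ _ _).const_mul _)
      ((evv_ii _ _ hwc _ _ _).const_mul _)]
    simp_rw [intervalIntegral.integral_const_mul]
    rw [hV0, hK0]; ring
  have hQ6i : ∫ x in (0:ℝ)..1, Q6 x * w x = 2 * (pb.eval 1 * K 1 - V1 1) := by
    have : ∀ x, Q6 x * w x = 2 * (pb.eval 1 - pa.derivative.eval 1) * (evv p1 1 x * w x)
        - 2 * pa.eval 1 * (evv (DD p1) 1 x * w x) := by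
      intro x
      rw [hQ6, (evv_deriv p1 1 x).deriv, Polynomial.deriv]; ring
    simp_rw [this]
    rw [intervalIntegral.integral_sub ((evv_ii _ _ hwc _ _ _).const_mul _)
      ((evv_ii _ _ hwc _ _ _).const_mul _)]
    simp_rw [intervalIntegral.integral_const_mul]
    rw [hV11, hK1]; ring
  have hQ8i : ∫ x in (0:ℝ)..1, Q8 x * w x = 2 * (pa.eval 1 * K 1) := by
    simp_rw [hQ8, mul_assoc, intervalIntegral.integral_const_mul]
    rw [hK1]
  rw [hQ4i, hQ6i, hQ8i, hQ3, hQ5, hQ7]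
  simp only [Polynomial.deriv]
  simp only [hG, hw0, hMa, hR, Polynomial.eval_mul, Polynomial.derivative_mul,
    Polynomial.eval_add] at hftc hlow
  linarith

end
end

section
/- (Classical spatial form of Lemma 4, observer synthesis.) Let a, b, c be polynomial functions with a(x) ≥ α > 0 on [0,1], ε1 > 0, and N, P1, P2 polynomial with P2(x,ξ) = P1(ξ,x) and N(x) ≥ ε1 on [0,1]. With S the operator (Sw)(x) = N(x)w(x) + ∫₀^x P1(x,ξ)w(ξ)dξ + ∫_x^1 P2(x,ξ)w(ξ)dξ and Q0,…,Q8 and the operator Q defined as in the primal Linear Operator Inequality, assume Q3 ≤ 0 and Q4(x) = 0 for all x ∈ [0,1]. Let O2 < 0 be a scalar such that ζ := −(Q5 + Q7/O2) > 0, and let O1 : [0,1] → ℝ be a continuous function satisfying (S O1)(x) = −(1/2)(O2·Q6(x) + Q8(x)) for all x ∈ [0,1]. Then for every twice continuously differentiable e : [0,1] → ℝ with e'(0) = 0 and e(1) = O2·e'(1), we have 2∫₀¹ [a(x)e''(x) + b(x)e'(x) + c(x)e(x) + O1(x)·e'(1)]·(Se)(x) dx ≤ ∫₀¹ (Qe)(x)e(x)dx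 − ζ·e(1)². -/
open MeasureTheory Real

noncomputable section

theorem IsPolyFun.hasDeriv {f : ℝ → ℝ} (hf : IsPolyFun f) :
    ∃ g, IsPolyFun g ∧ ∀ x, HasDerivAt f (g x) x := by
  obtain ⟨p, hp⟩ := hf
  refine ⟨fun x => p.derivative.eval x, ⟨_, fun _ => rfl⟩, fun x => ?_⟩
  have : f = fun x => p.eval x := funext hp
  rw [this]; exact p.hasDerivAt x

theorem IsPolyFun.cont {f : ℝ → ℝ} (hf : IsPolyFun f) : Continuous f := by
  obtain ⟨p, hp⟩ := hf
  have : f = fun x => p.eval x := funext hp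
  rw [this]; exact p.continuous

theorem IsPolyFun2.cont {f : ℝ → ℝ → ℝ} (hf : IsPolyFun2 f) :
    Continuous (fun z : ℝ × ℝ => f z.1 z.2) := by
  obtain ⟨p, hp⟩ := hf
  have : (fun z : ℝ × ℝ => f z.1 z.2) = fun z => MvPolynomial.eval ![z.1, z.2] p :=
    funext fun z => hp _ _
  rw [this]
  refine (MvPolynomial.continuous_eval p).comp ?_
  refine continuous_pi fun i => ?_
  fin_cases i
  · exact continuous_fst
  · exact continuous_snd

theorem IsPolyFun2.add {f g : ℝ → ℝ → ℝ} (hf : IsPolyFun2 f) (hg : IsPolyFun2 g) :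
    IsPolyFun2 (fun x y => f x y + g x y) := by
  obtain ⟨p, hp⟩ := hf
  obtain ⟨q, hq⟩ := hg
  exact ⟨p + q, fun x y => by simp [hp, hq]⟩

theorem IsPolyFun2.mul {f g : ℝ → ℝ → ℝ} (hf : IsPolyFun2 f) (hg : IsPolyFun2 g) :
    IsPolyFun2 (fun x y => f x y * g x y) := by
  obtain ⟨p, hp⟩ := hf
  obtain ⟨q, hq⟩ := hg
  exact ⟨p * q, fun x y => by simp [hp, hq]⟩

theorem IsPolyFun2.of_const (r : ℝ) : IsPolyFun2 (fun _ _ => r) :=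
  ⟨MvPolynomial.C r, fun x y => by simp⟩

theorem IsPolyFun2.fst : IsPolyFun2 (fun x _ => x) :=
  ⟨MvPolynomial.X 0, fun x y => by simp⟩

theorem IsPolyFun2.snd : IsPolyFun2 (fun _ y => y) :=
  ⟨MvPolynomial.X 1, fun x y => by simp⟩

theorem IsPolyFun.lift {f : ℝ → ℝ} (hf : IsPolyFun f) : IsPolyFun2 (fun x _ => f x) := by
  obtain ⟨p, hp⟩ := hf
  refine ⟨Polynomial.aeval (MvPolynomial.X 0) p, fun x y => ?_⟩
  show f x = _
  rw [hp, ← MvPolynomial.coe_aeval_eq_eval, RingHom.coe_coe, ← Polynomial.aeval_algHom_apply]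
  simp

theorem IsPolyFun2.ind {motive : (ℝ → ℝ → ℝ) → Prop}
    (hC : ∀ r : ℝ, motive (fun _ _ => r))
    (hadd : ∀ f g, IsPolyFun2 f → IsPolyFun2 g → motive f → motive g →
      motive (fun x y => f x y + g x y))
    (hx : ∀ f, IsPolyFun2 f → motive f → motive (fun x y => f x y * x))
    (hy : ∀ f, IsPolyFun2 f → motive f → motive (fun x y => f x y * y))
    {f : ℝ → ℝ → ℝ} (hf : IsPolyFun2 f) : motive f := by
  obtain ⟨p, hp⟩ := hf
  have : f = fun x y => MvPolynomial.eval ![x, y] p := by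
    funext x y; exact hp x y
  rw [this]
  clear this hp
  induction p using MvPolynomial.induction_on with
  | C r => simpa using hC r
  | add p q ihp ihq => simpa using hadd _ _ ⟨p, fun _ _ => rfl⟩ ⟨q, fun _ _ => rfl⟩ ihp ihq
  | mul_X p i ih =>
    fin_cases i
    · simpa using hx _ ⟨p, fun _ _ => rfl⟩ ih
    · simpa using hy _ ⟨p, fun _ _ => rfl⟩ ih

theorem IsPolyFun2.cont_comp {f : ℝ → ℝ → ℝ} (hf : IsPolyFun2 f) {u v : ℝ → ℝ}
    (hu : Continuous u) (hv : Continuous v) : Continuous (fun t => f (u t) (v t)) :=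
  hf.cont.comp (hu.prodMk hv)

theorem IsPolyFun2.leibniz {K : ℝ → ℝ → ℝ} (hK : IsPolyFun2 K) :
    ∃ Kx, IsPolyFun2 Kx ∧ (∀ x y, HasDerivAt (fun t => K t y) (Kx x y) x) ∧
      ∀ (w : ℝ → ℝ), Continuous w → ∀ z x : ℝ,
        HasDerivAt (fun t => ∫ ξ in z..t, K t ξ * w ξ)
          (K x x * w x + ∫ ξ in z..x, Kx x ξ * w ξ) x := by
  refine IsPolyFun2.ind (motive := fun K => ∃ Kx, IsPolyFun2 Kx ∧
    (∀ x y, HasDerivAt (fun t => K t y) (Kx x y) x) ∧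
      ∀ (w : ℝ → ℝ), Continuous w → ∀ z x : ℝ,
        HasDerivAt (fun t => ∫ ξ in z..t, K t ξ * w ξ)
          (K x x * w x + ∫ ξ in z..x, Kx x ξ * w ξ) x) ?_ ?_ ?_ ?_ hK
  · intro r
    refine ⟨fun _ _ => 0, .of_const 0, fun x y => hasDerivAt_const _ _, fun w hw z x => ?_⟩
    have hc : Continuous (fun ξ => r * w ξ) := by fun_prop
    simpa using intervalIntegral.integral_hasDerivAt_right (hc.intervalIntegrable z x)
      hc.stronglyMeasurable.stronglyMeasurableAtFilter hc.continuousAt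
  · rintro f g hf hg ⟨fx, hfx, hfd, hfi⟩ ⟨gx, hgx, hgd, hgi⟩
    refine ⟨_, hfx.add hgx, fun x y => (hfd x y).add (hgd x y), fun w hw z x => ?_⟩
    have h := (hfi w hw z x).add (hgi w hw z x)
    have key : ∀ {p q : ℝ → ℝ → ℝ}, IsPolyFun2 p → IsPolyFun2 q → ∀ t,
        ∫ ξ in z..t, (p t ξ + q t ξ) * w ξ =
          (∫ ξ in z..t, p t ξ * w ξ) + ∫ ξ in z..t, q t ξ * w ξ := by
      intro p q hp hq t
      rw [← intervalIntegral.integral_add]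
      · simp only [add_mul]
      · exact ((hp.cont_comp continuous_const continuous_id).mul hw).intervalIntegrable _ _
      · exact ((hq.cont_comp continuous_const continuous_id).mul hw).intervalIntegrable _ _
    have k1 := key hf hg
    have k2 := key hfx hgx x
    beta_reduce
    rw [k2, funext k1]
    refine h.congr_deriv ?_
    ring
  · rintro f hf ⟨fx, hfx, hfd, hfi⟩
    refine ⟨_, (hfx.mul .fst).add hf, fun x y => ?_, fun w hw z x => ?_⟩
    · refine ((hfd x y).mul (hasDerivAt_id x)).congr_deriv ?_
      simp
    · have h := (hfi w hw z x).mul (hasDerivAt_id x)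
      have key : ∀ {p : ℝ → ℝ → ℝ} (t : ℝ),
          ∫ ξ in z..t, p t ξ * t * w ξ = (∫ ξ in z..t, p t ξ * w ξ) * t := by
        intro p t
        rw [← intervalIntegral.integral_mul_const]
        congr 1; ext ξ; ring
      have e2 : ∫ ξ in z..x, (fx x ξ * x + f x ξ) * w ξ =
          (∫ ξ in z..x, fx x ξ * w ξ) * x + ∫ ξ in z..x, f x ξ * w ξ := by
        rw [← key, ← intervalIntegral.integral_add]
        · simp only [add_mul]
        · exact (((hfx.cont_comp continuous_const continuous_id).mul
            continuous_const).mul hw).intervalIntegrable _ _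
        · exact ((hf.cont_comp continuous_const continuous_id).mul hw).intervalIntegrable _ _
      beta_reduce
      rw [e2, funext (key (p := f))]
      refine h.congr_deriv ?_
      simp only [id]; ring
  · rintro f hf ⟨fx, hfx, hfd, hfi⟩
    refine ⟨_, hfx.mul .snd, fun x y => (hfd x y).mul_const y, fun w hw z x => ?_⟩
    have h := hfi (fun ξ => ξ * w ξ) (by fun_prop) z x
    simpa only [mul_assoc] using h

theorem cont_int {K : ℝ → ℝ → ℝ} (hK : IsPolyFun2 K) {w : ℝ → ℝ} (hw : Continuous w) (z : ℝ) :
    Continuous (fun x => ∫ ξ in z..x, K x ξ * w ξ) := by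
  obtain ⟨_, _, _, h⟩ := hK.leibniz
  exact continuous_iff_continuousAt.2 fun x => (h w hw z x).continuousAt

theorem IsPolyFun2.swap {f : ℝ → ℝ → ℝ} (hf : IsPolyFun2 f) :
    IsPolyFun2 (fun x y => f y x) := by
  refine IsPolyFun2.ind (motive := fun f => IsPolyFun2 (fun x y => f y x)) ?_ ?_ ?_ ?_ hf
  · exact fun r => .of_const r
  · exact fun f g _ _ h1 h2 => h1.add h2
  · exact fun f _ h => h.mul .snd
  · exact fun f _ h => h.mul .fst

theorem cont_int' {K : ℝ → ℝ → ℝ} (hK : IsPolyFun2 K) {w : ℝ → ℝ} (hw : Continuous w) (z : ℝ) :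
    Continuous (fun x => ∫ ξ in x..z, K x ξ * w ξ) := by
  rw [funext fun x => intervalIntegral.integral_symm (f := fun ξ => K x ξ * w ξ) z x]
  exact (cont_int hK hw z).neg

theorem int_add_ker {p q : ℝ → ℝ → ℝ} (hp : IsPolyFun2 p) (hq : IsPolyFun2 q) {w : ℝ → ℝ}
    (hw : Continuous w) (x y t : ℝ) :
    ∫ ξ in x..y, (p t ξ + q t ξ) * w ξ =
          (∫ ξ in x..y, p t ξ * w ξ) + ∫ ξ in x..y, q t ξ * w ξ := by
  rw [← intervalIntegral.integral_add]
  · simp only [add_mul]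
  · exact ((hp.cont_comp continuous_const continuous_id).mul hw).intervalIntegrable _ _
  · exact ((hq.cont_comp continuous_const continuous_id).mul hw).intervalIntegrable _ _

theorem tri_swap_s6 {K : ℝ → ℝ → ℝ} (hK : IsPolyFun2 K) : ∀ {v w : ℝ → ℝ},
    Continuous v → Continuous w →
    ∫ x in (0:ℝ)..1, (∫ ξ in (0:ℝ)..x, K x ξ * w ξ) * v x =
    ∫ x in (0:ℝ)..1, (∫ ξ in x..(1:ℝ), K ξ x * v ξ) * w x := by
  refine IsPolyFun2.ind (motive := fun K => ∀ {v w : ℝ → ℝ},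
    Continuous v → Continuous w →
    ∫ x in (0:ℝ)..1, (∫ ξ in (0:ℝ)..x, K x ξ * w ξ) * v x =
    ∫ x in (0:ℝ)..1, (∫ ξ in x..(1:ℝ), K ξ x * v ξ) * w x) ?_ ?_ ?_ ?_ hK
  · intro r v w hv hw
    have hW : ∀ x, HasDerivAt (fun x => ∫ ξ in (0:ℝ)..x, r * w ξ) (r * w x) x := fun x => by
      have hc : Continuous (fun ξ => r * w ξ) := by fun_prop
      exact intervalIntegral.integral_hasDerivAt_right (hc.intervalIntegrable _ x)
        hc.stronglyMeasurable.stronglyMeasurableAtFilter hc.continuousAt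
    have hV : ∀ x, HasDerivAt (fun x => ∫ ξ in (1:ℝ)..x, v ξ) (v x) x := fun x => by
      exact intervalIntegral.integral_hasDerivAt_right (hv.intervalIntegrable _ x)
        hv.stronglyMeasurable.stronglyMeasurableAtFilter hv.continuousAt
    have h := intervalIntegral.integral_mul_deriv_eq_deriv_mul (a := 0) (b := 1)
      (fun x _ => hW x) (fun x _ => hV x)
      ((continuous_const.mul hw).intervalIntegrable _ _) (hv.intervalIntegrable _ _)
    rw [h]
    simp only [intervalIntegral.integral_same, mul_zero, zero_mul, sub_zero, zero_sub]
    rw [← intervalIntegral.integral_neg]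
    congr 1; ext x
    rw [intervalIntegral.integral_symm x 1, intervalIntegral.integral_const_mul]
    ring
  · intro f g hf hg ihf ihg v w hv hw
    have e1 : ∀ x, ∫ ξ in (0:ℝ)..x, (f x ξ + g x ξ) * w ξ = _ := fun x =>
      int_add_ker hf hg hw 0 x x
    have e2 : ∀ x, ∫ ξ in x..(1:ℝ), (f ξ x + g ξ x) * v ξ = _ := fun x =>
      int_add_ker hf.swap hg.swap hv x 1 x
    simp only [e1, e2]
    simp only [add_mul (∫ _ in _.._, _)]
    rw [intervalIntegral.integral_add, intervalIntegral.integral_add, ihf hv hw, ihg hv hw]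
    · exact ((cont_int' hf.swap hv 1).mul hw).intervalIntegrable _ _
    · exact ((cont_int' hg.swap hv 1).mul hw).intervalIntegrable _ _
    · exact ((cont_int hf hw 0).mul hv).intervalIntegrable _ _
    · exact ((cont_int hg hw 0).mul hv).intervalIntegrable _ _
  · intro f hf ih v w hv hw
    have h := ih (v := fun x => x * v x) (w := w) (by fun_prop) hw
    simp only [mul_assoc] at h ⊢
    rw [← h]
    congr 1; ext x
    have : ∫ ξ in (0:ℝ)..x, f x ξ * (x * w ξ) = x * ∫ ξ in (0:ℝ)..x, f x ξ * w ξ := by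
      rw [← intervalIntegral.integral_const_mul]
      congr 1; ext ξ; ring
    rw [this]; ring
  · intro f hf ih v w hv hw
    have h := ih (v := v) (w := fun x => x * w x) hv (by fun_prop)
    simp only [mul_assoc] at h ⊢
    rw [h]
    congr 1; ext x
    have : ∫ ξ in x..(1:ℝ), f ξ x * (x * v ξ) = x * ∫ ξ in x..(1:ℝ), f ξ x * v ξ := by
      rw [← intervalIntegral.integral_const_mul]
      congr 1; ext ξ; ring
    rw [this]; ring

theorem wirt {f g : ℝ → ℝ} (hf : ∀ x, HasDerivAt f (g x) x) (hg : Continuous g) (h0 : f 0 = 0) :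
    π ^ 2 / 4 * ∫ x in (0:ℝ)..1, f x ^ 2 ≤ ∫ x in (0:ℝ)..1, g x ^ 2 := by
  have hfc : Continuous f := continuous_iff_continuousAt.2 fun x => (hf x).continuousAt
  have key : ∀ k ∈ Set.Ioo 0 (π / 2),
      k ^ 2 * ∫ x in (0:ℝ)..1, f x ^ 2 ≤ ∫ x in (0:ℝ)..1, g x ^ 2 := by
    intro k hk
    have hcos : ∀ x ∈ Set.uIcc (0:ℝ) 1, cos (k * (1 - x)) ≠ 0 := by
      intro x hx
      rw [Set.uIcc_of_le zero_le_one] at hx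
      refine (cos_pos_of_mem_Ioo ⟨?_, ?_⟩).ne'
      · nlinarith [hk.1, hk.2, hx.1, hx.2, mul_nonneg hk.1.le (sub_nonneg.2 hx.2), pi_pos]
      · nlinarith [hk.1, hk.2, hx.1, hx.2, mul_nonneg hk.1.le hx.1, pi_pos]
    let w : ℝ → ℝ := fun x => k * tan (k * (1 - x))
    have hd : ∀ x ∈ Set.uIcc (0:ℝ) 1, HasDerivAt (fun x => w x * f x ^ 2)
        (2 * w x * f x * g x - (w x ^ 2 + k ^ 2) * f x ^ 2) x := by
      intro x hx
      have h1 : HasDerivAt (fun x => k * (1 - x)) (-k) x := by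
        simpa using ((hasDerivAt_id x).const_sub 1).const_mul k
      have h2 := (((hasDerivAt_tan (hcos x hx)).comp x h1).const_mul k).mul ((hf x).pow 2)
      refine h2.congr_deriv ?_
      have := hcos x hx
      have h3 : 1 / cos (k * (1 - x)) ^ 2 = 1 + tan (k * (1 - x)) ^ 2 := by
        rw [tan_eq_sin_div_cos]
        field_simp
        linarith [sin_sq_add_cos_sq (k * (1 - x))]
      rw [h3]
      simp only [w, Function.comp_apply, Pi.pow_apply]
      push_cast
      ring
    have hwc : ContinuousOn w (Set.uIcc (0:ℝ) 1) := by
      intro x hx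
      have : ContinuousAt (fun x => tan (k * (1 - x))) x :=
        ContinuousAt.comp (f := fun x => k * (1 - x)) (g := tan)
          (continuousAt_tan.2 (hcos x hx)) (by fun_prop)
      exact (this.const_mul k).continuousWithinAt
    have hci : ContinuousOn (fun x => 2 * w x * f x * g x - (w x ^ 2 + k ^ 2) * f x ^ 2)
        (Set.uIcc (0:ℝ) 1) := by
      have := hfc.continuousOn (s := Set.uIcc (0:ℝ) 1)
      have := hg.continuousOn (s := Set.uIcc (0:ℝ) 1)
      fun_prop
    have hint := intervalIntegral.integral_eq_sub_of_hasDerivAt hd hci.intervalIntegrable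
    have hw1 : w 1 = 0 := by simp [w]
    rw [hw1, h0] at hint
    rw [← intervalIntegral.integral_const_mul]
    have hkf : IntervalIntegrable (fun x => k ^ 2 * f x ^ 2) volume 0 1 :=
      (by fun_prop : Continuous (fun x => k ^ 2 * f x ^ 2)).intervalIntegrable _ _
    have hgg : IntervalIntegrable (fun x => g x ^ 2) volume 0 1 :=
      (by fun_prop : Continuous (fun x => g x ^ 2)).intervalIntegrable _ _
    have hm := intervalIntegral.integral_mono_on zero_le_one
      (hci.intervalIntegrable.add hkf) hgg (fun x hx => by
        nlinarith [sq_nonneg (g x - w x * f x)])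
    rw [intervalIntegral.integral_add hci.intervalIntegrable hkf, hint] at hm
    simpa using hm
  have ht : Filter.Tendsto (fun k : ℝ => k ^ 2 * ∫ x in (0:ℝ)..1, f x ^ 2)
      (nhdsWithin (π / 2) (Set.Iio (π / 2))) (nhds ((π / 2) ^ 2 * ∫ x in (0:ℝ)..1, f x ^ 2)) :=
    ((by fun_prop : Continuous (fun k : ℝ => k ^ 2 * ∫ x in (0:ℝ)..1, f x ^ 2)).tendsto _).mono_left
      nhdsWithin_le_nhds
  have := le_of_tendsto ht (by
    filter_upwards [Ioo_mem_nhdsLT (by positivity : (0:ℝ) < π / 2)] with k hk using key k hk)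
  rwa [show (π / 2) ^ 2 = π ^ 2 / 4 by ring] at this

theorem semisep_selfadj {N : ℝ → ℝ} {P1 P2 : ℝ → ℝ → ℝ} (hN : IsPolyFun N)
    (hP1 : IsPolyFun2 P1) (hP2 : IsPolyFun2 P2) (hsym : ∀ x ξ : ℝ, P2 x ξ = P1 ξ x)
    {v w : ℝ → ℝ} (hv : Continuous v) (hw : Continuous w) :
    ∫ x in (0:ℝ)..1, v x * semisepOp N P1 P2 w x =
    ∫ x in (0:ℝ)..1, semisepOp N P1 P2 v x * w x := by
  have h1 := tri_swap_s6 hP1 hv hw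
  have h2 := tri_swap_s6 hP1 hw hv
  have hNc := hN.cont
  have c1 : ∀ {w}, Continuous w → Continuous (fun x => ∫ ξ in (0:ℝ)..x, P1 x ξ * w ξ) :=
    fun hw => cont_int hP1 hw 0
  have c2 : ∀ {w}, Continuous w → Continuous (fun x => ∫ ξ in x..(1:ℝ), P2 x ξ * w ξ) :=
    fun hw => cont_int' hP2 hw 1
  have e1 : ∫ x in (0:ℝ)..1, v x * semisepOp N P1 P2 w x =
      (∫ x in (0:ℝ)..1, N x * v x * w x) +
      (∫ x in (0:ℝ)..1, (∫ ξ in (0:ℝ)..x, P1 x ξ * w ξ) * v x) +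
      ∫ x in (0:ℝ)..1, (∫ ξ in x..(1:ℝ), P2 x ξ * w ξ) * v x := by
    rw [← intervalIntegral.integral_add, ← intervalIntegral.integral_add]
    · congr 1; ext x; simp only [semisepOp]; ring
    · exact (((hNc.mul hv).mul hw).add ((c1 hw).mul hv)).intervalIntegrable _ _
    · exact ((c2 hw).mul hv).intervalIntegrable _ _
    · exact ((hNc.mul hv).mul hw).intervalIntegrable _ _
    · exact ((c1 hw).mul hv).intervalIntegrable _ _
  have e2 : ∫ x in (0:ℝ)..1, semisepOp N P1 P2 v x * w x =
      (∫ x in (0:ℝ)..1, N x * v x * w x) +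
      (∫ x in (0:ℝ)..1, (∫ ξ in (0:ℝ)..x, P1 x ξ * v ξ) * w x) +
      ∫ x in (0:ℝ)..1, (∫ ξ in x..(1:ℝ), P2 x ξ * v ξ) * w x := by
    rw [← intervalIntegral.integral_add, ← intervalIntegral.integral_add]
    · congr 1; ext x; simp only [semisepOp]; ring
    · exact (((hNc.mul hv).mul hw).add ((c1 hv).mul hw)).intervalIntegrable _ _
    · exact ((c2 hv).mul hw).intervalIntegrable _ _
    · exact ((hNc.mul hv).mul hw).intervalIntegrable _ _
    · exact ((c1 hv).mul hw).intervalIntegrable _ _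
  rw [e1, e2, h1, h2]
  simp only [hsym]
  ring

/-- Linear combination of three kernels with coefficients depending on the outer variable. -/
theorem int_comb {p q r : ℝ → ℝ → ℝ} (hp : IsPolyFun2 p) (hq : IsPolyFun2 q)
    (hr : IsPolyFun2 r) {w : ℝ → ℝ}
    (hw : Continuous w) (x y t A B C : ℝ) :
    ∫ ξ in x..y, (A * p t ξ + B * q t ξ + C * r t ξ) * w ξ =
      A * (∫ ξ in x..y, p t ξ * w ξ) + B * (∫ ξ in x..y, q t ξ * w ξ)
        + C * ∫ ξ in x..y, r t ξ * w ξ := by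
  have h1 := int_add_ker (((IsPolyFun2.of_const A).mul hp).add ((IsPolyFun2.of_const B).mul hq))
    ((IsPolyFun2.of_const C).mul hr) hw x y t
  have h2 := int_add_ker ((IsPolyFun2.of_const A).mul hp) ((IsPolyFun2.of_const B).mul hq) hw x y t
  rw [h1, h2]
  simp only [mul_assoc, intervalIntegral.integral_const_mul]

set_option maxHeartbeats 2000000 in
/-- Classical spatial form of Lemma 4 (observer synthesis). -/
theorem observer_synthesis_inequality
    (a b c : ℝ → ℝ) (α : ℝ) (hα : 0 < α)
    (ha : IsPolyFun a) (hb : IsPolyFun b) (hc : IsPolyFun c)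
    (haα : ∀ x ∈ Set.Icc (0:ℝ) 1, α ≤ a x)
    (ε1 : ℝ) (hε1 : 0 < ε1)
    (N : ℝ → ℝ) (P1 P2 : ℝ → ℝ → ℝ)
    (hNp : IsPolyFun N) (hP1p : IsPolyFun2 P1) (hP2p : IsPolyFun2 P2)
    (hsym : ∀ x ξ : ℝ, P2 x ξ = P1 ξ x)
    (hNε : ∀ x ∈ Set.Icc (0:ℝ) 1, ε1 ≤ N x)
    (Q0 Q4 Q6 Q8 : ℝ → ℝ) (Q1 Q2 : ℝ → ℝ → ℝ) (Q3 Q5 Q7 : ℝ)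
    (hQ0 : ∀ x : ℝ, Q0 x =
      deriv (fun t => deriv (fun s => a s * N s) t - b t * N t) x
        + 2 * deriv (fun t => a t * (P1 t x - P2 t x)) x
        + 2 * N x * c x - π ^ 2 / 2 * α * ε1)
    (hQ1 : ∀ x ξ : ℝ, Q1 x ξ =
      deriv (fun t => deriv (fun s => a s * P1 s ξ) t - b t * P1 t ξ) x
        + deriv (fun s => deriv (fun r => a r * P1 x r) s - b s * P1 x s) ξ
        + (c x + c ξ) * P1 x ξ)
    (hQ2 : ∀ x ξ : ℝ, Q2 x ξ = Q1 ξ x)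
    (hQ3def : Q3 = (deriv a 0 - b 0) * N 0 + a 0 * deriv N 0 - π ^ 2 / 2 * α * ε1)
    (hQ4def : ∀ x : ℝ, Q4 x = 2 * (deriv a 0 - b 0) * P2 0 x
        + 2 * a 0 * deriv (fun t => P2 t x) 0 + π ^ 2 * α * ε1)
    (hQ5 : Q5 = (b 1 - deriv a 1) * N 1 - a 1 * deriv N 1)
    (hQ6 : ∀ x : ℝ, Q6 x = 2 * (b 1 - deriv a 1) * P1 1 x
        - 2 * a 1 * deriv (fun t => P1 t x) 1)
    (hQ7 : Q7 = 2 * a 1 * N 1)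
    (hQ8 : ∀ x : ℝ, Q8 x = 2 * a 1 * P1 1 x)
    (hQ3 : Q3 ≤ 0) (hQ4 : ∀ x ∈ Set.Icc (0:ℝ) 1, Q4 x = 0)
    (O2 : ℝ) (hO2 : O2 < 0)
    (ζ : ℝ) (hζdef : ζ = -(Q5 + Q7 / O2)) (hζ : 0 < ζ)
    (O1 : ℝ → ℝ) (hO1cont : Continuous O1)
    (hO1 : ∀ x ∈ Set.Icc (0:ℝ) 1,
      semisepOp N P1 P2 O1 x = -(1/2) * (O2 * Q6 x + Q8 x)) :
    ∀ e : ℝ → ℝ, ContDiff ℝ 2 e → deriv e 0 = 0 → e 1 = O2 * deriv e 1 →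
      2 * (∫ x in (0:ℝ)..1,
            (a x * iteratedDeriv 2 e x + b x * deriv e x + c x * e x
              + O1 x * deriv e 1) * semisepOp N P1 P2 e x)
        ≤ (∫ x in (0:ℝ)..1,
              (Q0 x * e x + (∫ ξ in (0:ℝ)..x, Q1 x ξ * e ξ)
                + ∫ ξ in x..(1:ℝ), Q2 x ξ * e ξ) * e x)
          - ζ * (e 1) ^ 2 := by
  intro e he he0 he1
  obtain ⟨a1, ha1p, ha1⟩ := ha.hasDeriv
  obtain ⟨a2, ha2p, ha2⟩ := ha1p.hasDeriv
  obtain ⟨b1, hb1p, hb1⟩ := hb.hasDeriv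
  obtain ⟨N1, hN1p, hN1⟩ := hNp.hasDeriv
  obtain ⟨N2, hN2p, hN2⟩ := hN1p.hasDeriv
  obtain ⟨A1, hA1p, hA1, hA1i⟩ := hP1p.leibniz
  obtain ⟨A2, hA2p, hA2, hA2i⟩ := hA1p.leibniz
  obtain ⟨B1, hB1p, hB1, hB1i⟩ := hP2p.leibniz
  obtain ⟨B2, hB2p, hB2, hB2i⟩ := hB1p.leibniz
  -- derivatives of e
  have hee : ∀ x, HasDerivAt e (deriv e x) x := fun x =>
    ((he.differentiable (by norm_num)) x).hasDerivAt
  have hde : ContDiff ℝ 1 (deriv e) := by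
    have := (contDiff_succ_iff_deriv (n := 1) (f := e) (𝕜 := ℝ)).1 (by rw [one_add_one_eq_two]; exact he)
    exact this.2.2
  have hee2 : ∀ x, HasDerivAt (deriv e) (iteratedDeriv 2 e x) x := fun x => by
    rw [iteratedDeriv_succ, iteratedDeriv_one]
    exact ((hde.differentiable (by norm_num)) x).hasDerivAt
  have hec : Continuous e := he.continuous
  have hdec : Continuous (deriv e) := hde.continuous
  have hddec : Continuous (iteratedDeriv 2 e) := he.continuous_iteratedDeriv 2 le_rfl
  generalize hE1 : deriv e = E1 at *
  generalize hE2 : iteratedDeriv 2 e = E2 at *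
  have hac := ha.cont
  have ha1c := ha1p.cont
  have ha2c := ha2p.cont
  have hbc := hb.cont
  have hb1c := hb1p.cont
  have hcc := hc.cont
  have hNc := hNp.cont
  have hN1c := hN1p.cont
  have hN2c := hN2p.cont
  -- the differential kernels
  let L1 : ℝ → ℝ → ℝ := fun x ξ =>
    (a2 x + (-1) * b1 x + c x) * P1 x ξ + (2 * a1 x + (-1) * b x) * A1 x ξ + a x * A2 x ξ
  let L2 : ℝ → ℝ → ℝ := fun x ξ =>
    (a2 x + (-1) * b1 x + c x) * P2 x ξ + (2 * a1 x + (-1) * b x) * B1 x ξ + a x * B2 x ξ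
  have q0 : IsPolyFun2 (fun x _ => a2 x + (-1) * b1 x + c x) :=
    (ha2p.lift.add ((IsPolyFun2.of_const (-1)).mul hb1p.lift)).add hc.lift
  have q1 : IsPolyFun2 (fun x _ => 2 * a1 x + (-1) * b x) :=
    ((IsPolyFun2.of_const 2).mul ha1p.lift).add ((IsPolyFun2.of_const (-1)).mul hb.lift)
  have hL1p : IsPolyFun2 L1 := ((q0.mul hP1p).add (q1.mul hA1p)).add (ha.lift.mul hA2p)
  have hL2p : IsPolyFun2 L2 := ((q0.mul hP2p).add (q1.mul hB1p)).add (ha.lift.mul hB2p)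
  have hdd : ∀ (P A B : ℝ → ℝ), (∀ x, HasDerivAt P (A x) x) → (∀ x, HasDerivAt A (B x) x) →
      ∀ x, deriv (fun t => deriv (fun s => a s * P s) t - b t * P t) x =
        (a2 x - b1 x) * P x + (2 * a1 x - b x) * A x + a x * B x := by
    intro P A B hP hA x
    have h1 : (fun t => deriv (fun s => a s * P s) t - b t * P t) =
        fun t => a1 t * P t + a t * A t - b t * P t := by
      funext t
      rw [((ha1 t).fun_mul (hP t)).deriv]
    rw [h1]
    have h2 := ((((ha2 x).fun_mul (hP x)).fun_add ((ha1 x).fun_mul (hA x))).fun_sub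
      ((hb1 x).fun_mul (hP x))).deriv
    rw [h2]; ring
  have hQ1' : ∀ x ξ, Q1 x ξ = L1 x ξ + L2 ξ x := by
    intro x ξ
    rw [hQ1, hdd (fun s => P1 s ξ) (fun s => A1 s ξ) (fun s => A2 s ξ) (fun t => hA1 t ξ)
      (fun t => hA2 t ξ)]
    have : ∀ r, P1 x r = P2 r x := fun r => (hsym r x).symm
    simp only [this]
    rw [hdd (fun s => P2 s x) (fun s => B1 s x) (fun s => B2 s x) (fun t => hB1 t x)
      (fun t => hB2 t x)]
    simp only [L1, L2, this]
    ring
  have hQ0' : ∀ x, Q0 x = (a2 x - b1 x) * N x + (2 * a1 x - b x) * N1 x + a x * N2 x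
      + 2 * a x * (A1 x x - B1 x x) + 2 * N x * c x - π ^ 2 / 2 * α * ε1 := by
    intro x
    rw [hQ0, hdd N N1 N2 hN1 hN2]
    have h2 := ((ha1 x).fun_mul ((hA1 x x).fun_sub (hB1 x x))).deriv
    rw [h2, hsym x x]
    ring
  -- u and its derivatives
  let u0 : ℝ → ℝ := fun x => (∫ ξ in (0:ℝ)..x, P1 x ξ * e ξ) - ∫ ξ in (1:ℝ)..x, P2 x ξ * e ξ
  let u1 : ℝ → ℝ := fun x => (∫ ξ in (0:ℝ)..x, A1 x ξ * e ξ) - ∫ ξ in (1:ℝ)..x, B1 x ξ * e ξ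
  let u2 : ℝ → ℝ := fun x => (∫ ξ in (0:ℝ)..x, A2 x ξ * e ξ) - ∫ ξ in (1:ℝ)..x, B2 x ξ * e ξ
  have hu0 : ∀ x, HasDerivAt u0 (u1 x) x := fun x => by
    refine ((hA1i e hec 0 x).fun_sub (hB1i e hec 1 x)).congr_deriv ?_
    simp only [u1, hsym x x]; ring
  have hu1 : ∀ x, HasDerivAt u1 ((A1 x x - B1 x x) * e x + u2 x) x := fun x => by
    refine ((hA2i e hec 0 x).fun_sub (hB2i e hec 1 x)).congr_deriv ?_
    simp only [u2]; ring
  have hu0c : Continuous u0 := (cont_int hP1p hec 0).sub (cont_int hP2p hec 1)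
  have hu1c : Continuous u1 := (cont_int hA1p hec 0).sub (cont_int hB1p hec 1)
  have hu2c : Continuous u2 := (cont_int hA2p hec 0).sub (cont_int hB2p hec 1)
  have hS : ∀ x, semisepOp N P1 P2 e x = N x * e x + u0 x := fun x => by
    simp only [semisepOp, u0]
    rw [intervalIntegral.integral_symm 1 x]; ring
  let J1 : ℝ → ℝ := fun x => ∫ ξ in (0:ℝ)..x, L1 x ξ * e ξ
  let J2 : ℝ → ℝ := fun x => ∫ ξ in x..(1:ℝ), L2 x ξ * e ξ
  have hJ1c : Continuous J1 := cont_int hL1p hec 0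
  have hJ2c : Continuous J2 := cont_int' hL2p hec 1
  have hJ : ∀ x, (a2 x - b1 x + c x) * u0 x + (2 * a1 x - b x) * u1 x + a x * u2 x
      = J1 x + J2 x := fun x => by
    have h1 := int_comb hP1p hA1p hA2p hec 0 x x (a2 x + (-1) * b1 x + c x)
      (2 * a1 x + (-1) * b x) (a x)
    have h2 := int_comb hP2p hB1p hB2p hec 1 x x (a2 x + (-1) * b1 x + c x)
      (2 * a1 x + (-1) * b x) (a x)
    simp only [J1, J2, L1, L2]
    rw [intervalIntegral.integral_symm 1 x, h1, h2]
    simp only [u0, u1, u2]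
    ring
  have hdiag : Continuous (fun x => A1 x x - B1 x x) :=
    (hA1p.cont_comp continuous_id continuous_id).sub (hB1p.cont_comp continuous_id continuous_id)
  -- integration by parts
  let R : ℝ → ℝ := fun x => 2 * e x * (a x * (A1 x x - B1 x x) * e x + J1 x + J2 x)
    + ((a2 x - b1 x) * N x + (2 * a1 x - b x) * N1 x + a x * N2 x + 2 * N x * c x) * e x ^ 2
  have hRc : Continuous R := by fun_prop
  let F : ℝ → ℝ := fun x => (a x * E2 x + b x * E1 x + c x * e x) * (N x * e x + u0 x)
  have hFc : Continuous F := by fun_prop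
  let Φ : ℝ → ℝ := fun x => 2 * (a x * u0 x * E1 x - (a1 x * u0 x + a x * u1 x) * e x
      + b x * u0 x * e x) + 2 * (a x * N x * e x * E1 x)
      + (b x * N x - (a1 x * N x + a x * N1 x)) * (e x * e x)
  have hΦ : ∀ x, HasDerivAt Φ (2 * F x - R x + 2 * (a x * N x * E1 x ^ 2)) x := fun x => by
    have da := ha1 x
    have da1 := ha2 x
    have db := hb1 x
    have dN := hN1 x
    have dN1 := hN2 x
    have du := hu0 x
    have du1 := hu1 x
    have de := hee x
    have dE := hee2 x
    have h := (((((da.fun_mul du).fun_mul dE).fun_sub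
      (((da1.fun_mul du).fun_add (da.fun_mul du1)).fun_mul de)).fun_add
      ((db.fun_mul du).fun_mul de)).const_mul 2 |>.fun_add
      ((((da.fun_mul dN).fun_mul de).fun_mul dE).const_mul 2)).fun_add
      (((db.fun_mul dN).fun_sub ((da1.fun_mul dN).fun_add (da.fun_mul dN1))).fun_mul
        (de.fun_mul de))
    refine h.congr_deriv ?_
    simp only [F, R]
    linear_combination (-2 * e x) * hJ x
  have hW0c : Continuous (fun x => a x * N x * E1 x ^ 2) := by fun_prop
  have hFTC := intervalIntegral.integral_eq_sub_of_hasDerivAt (a := 0) (b := 1)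
    (fun x _ => hΦ x) ((by fun_prop : Continuous (fun x => 2 * F x - R x +
      2 * (a x * N x * E1 x ^ 2))).intervalIntegrable _ _)
  rw [intervalIntegral.integral_add ((by fun_prop : Continuous (fun x => 2 * F x - R x)).intervalIntegrable _ _)
      ((by fun_prop : Continuous (fun x => 2 * (a x * N x * E1 x ^ 2))).intervalIntegrable _ _),
    intervalIntegral.integral_sub ((by fun_prop : Continuous (fun x => 2 * F x)).intervalIntegrable _ _)
      (hRc.intervalIntegrable _ _),
    intervalIntegral.integral_const_mul, intervalIntegral.integral_const_mul] at hFTC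
  -- Wirtinger
  have hW1 : α * ε1 * ∫ x in (0:ℝ)..1, E1 x ^ 2 ≤ ∫ x in (0:ℝ)..1, a x * N x * E1 x ^ 2 := by
    rw [← intervalIntegral.integral_const_mul]
    refine intervalIntegral.integral_mono_on zero_le_one
      ((by fun_prop : Continuous (fun x => α * ε1 * E1 x ^ 2)).intervalIntegrable _ _)
      (hW0c.intervalIntegrable _ _) (fun x hx => ?_)
    have := haα x hx
    have := hNε x hx
    gcongr
    linarith
  have hW2 := wirt (f := fun x => e x - e 0) (g := E1) (fun x => (hee x).sub_const _) hdec (by simp)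
  have hW3 : ∫ x in (0:ℝ)..1, (e x - e 0) ^ 2 =
      (∫ x in (0:ℝ)..1, e x ^ 2) - 2 * e 0 * (∫ x in (0:ℝ)..1, e x) + e 0 ^ 2 := by
    have : ∫ x in (0:ℝ)..1, e 0 ^ 2 = e 0 ^ 2 := by simp
    rw [← this, ← intervalIntegral.integral_const_mul, ← intervalIntegral.integral_sub,
      ← intervalIntegral.integral_add]
    · congr 1; ext x; ring
    · exact (by fun_prop : Continuous (fun x => e x ^ 2 - 2 * e 0 * e x)).intervalIntegrable _ _
    · exact (by fun_prop : Continuous (fun x => e 0 ^ 2)).intervalIntegrable _ _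
    · exact (by fun_prop : Continuous (fun x => e x ^ 2)).intervalIntegrable _ _
    · exact (by fun_prop : Continuous (fun x => 2 * e 0 * e x)).intervalIntegrable _ _
  rw [hW3] at hW2
  have hW4 := mul_le_mul_of_nonneg_left hW2 (mul_pos hα hε1).le
  -- the O1 term
  have hSc : Continuous (semisepOp N P1 P2 e) := by
    rw [funext hS]; fun_prop
  have hO : ∫ x in (0:ℝ)..1, O1 x * semisepOp N P1 P2 e x =
      -(1/2) * ∫ x in (0:ℝ)..1, (O2 * Q6 x + Q8 x) * e x := by
    rw [semisep_selfadj hNp hP1p hP2p hsym hO1cont hec, ← intervalIntegral.integral_const_mul]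
    refine intervalIntegral.integral_congr fun x hx => ?_
    rw [Set.uIcc_of_le zero_le_one] at hx
    simp only [hO1 x hx]; ring
  have hO' : ∫ x in (0:ℝ)..1, (O2 * Q6 x + Q8 x) * e x =
      (2 * O2 * (b 1 - a1 1) + 2 * a 1) * u0 1 - 2 * O2 * a 1 * u1 1 := by
    have h := int_comb hP1p hA1p hA1p hec 0 1 1 (2 * O2 * (b 1 - a1 1) + 2 * a 1)
      (-2 * O2 * a 1) 0
    simp only [u0, u1, intervalIntegral.integral_same, sub_zero]
    rw [show ∀ p q : ℝ, (2 * O2 * (b 1 - a1 1) + 2 * a 1) * p - 2 * O2 * a 1 * q =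
      (2 * O2 * (b 1 - a1 1) + 2 * a 1) * p + (-2 * O2 * a 1) * q + 0 * q by intros; ring, ← h]
    congr 1; ext x
    rw [hQ6, hQ8, (hA1 1 x).deriv, (ha1 1).deriv]; ring
  have hLHS : ∫ x in (0:ℝ)..1, (a x * E2 x + b x * E1 x + c x * e x
              + O1 x * E1 1) * semisepOp N P1 P2 e x =
      (∫ x in (0:ℝ)..1, F x) + E1 1 * ∫ x in (0:ℝ)..1, O1 x * semisepOp N P1 P2 e x := by
    rw [← intervalIntegral.integral_const_mul, ← intervalIntegral.integral_add]
    · congr 1; ext x; simp only [F, hS]; ring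
    · exact hFc.intervalIntegrable _ _
    · exact (by fun_prop : Continuous (fun x => E1 1 * (O1 x * semisepOp N P1 P2 e x))).intervalIntegrable _ _
  -- Q4 term
  have h4 : 2 * (a1 0 - b 0) * u0 0 + 2 * a 0 * u1 0 + π ^ 2 * α * ε1 * ∫ x in (0:ℝ)..1, e x = 0 := by
    have h := int_comb hP2p hB1p (IsPolyFun2.of_const 1) hec 0 1 0 (2 * (a1 0 - b 0))
      (2 * a 0) (π ^ 2 * α * ε1)
    have hz : ∫ ξ in (0:ℝ)..1, (2 * (a1 0 - b 0) * P2 0 ξ + 2 * a 0 * B1 0 ξ +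
        π ^ 2 * α * ε1 * 1) * e ξ = 0 := by
      rw [intervalIntegral.integral_congr (g := fun _ => (0:ℝ))]
      · simp
      · intro x hx
        rw [Set.uIcc_of_le zero_le_one] at hx
        have := hQ4 x hx
        rw [hQ4def, (ha1 0).deriv, (hB1 0 x).deriv] at this
        simp only [mul_one, this, zero_mul]
    rw [hz] at h
    simp only [one_mul] at h
    simp only [u0, u1, intervalIntegral.integral_same]
    rw [intervalIntegral.integral_symm 0 1, intervalIntegral.integral_symm 0 1]
    linarith
  -- Q side
  have s1 := tri_swap_s6 hL1p hec hec
  have s2 := tri_swap_s6 hL2p.swap hec hec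
  have hRHS : ∫ x in (0:ℝ)..1, (Q0 x * e x + (∫ ξ in (0:ℝ)..x, Q1 x ξ * e ξ)
                + ∫ ξ in x..(1:ℝ), Q2 x ξ * e ξ) * e x =
      (∫ x in (0:ℝ)..1, R x) - π ^ 2 / 2 * α * ε1 * ∫ x in (0:ℝ)..1, e x ^ 2 := by
    let K1 : ℝ → ℝ := fun x => ∫ ξ in (0:ℝ)..x, L2 ξ x * e ξ
    let K2 : ℝ → ℝ := fun x => ∫ ξ in x..(1:ℝ), L1 ξ x * e ξ
    have hK1c : Continuous K1 := cont_int hL2p.swap hec 0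
    have hK2c : Continuous K2 := cont_int' hL1p.swap hec 1
    have t1 : ∀ x, ∫ ξ in (0:ℝ)..x, Q1 x ξ * e ξ = J1 x + K1 x := fun x => by
      simp only [hQ1']
      exact int_add_ker hL1p hL2p.swap hec 0 x x
    have t2 : ∀ x, ∫ ξ in x..(1:ℝ), Q2 x ξ * e ξ = K2 x + J2 x := fun x => by
      simp only [hQ2, hQ1']
      exact int_add_ker hL1p.swap hL2p hec x 1 x
    have s1' : ∫ x in (0:ℝ)..1, J1 x * e x = ∫ x in (0:ℝ)..1, K2 x * e x := s1
    have s2' : ∫ x in (0:ℝ)..1, K1 x * e x = ∫ x in (0:ℝ)..1, J2 x * e x := s2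
    have z : ∫ x in (0:ℝ)..1, (K1 x * e x - J2 x * e x + (K2 x * e x - J1 x * e x)) = 0 := by
      rw [intervalIntegral.integral_add, intervalIntegral.integral_sub,
        intervalIntegral.integral_sub, s1', s2']
      · ring
      all_goals exact Continuous.intervalIntegrable (by fun_prop) _ _
    have z' : (∫ x in (0:ℝ)..1, R x) = (∫ x in (0:ℝ)..1, R x) +
        ∫ x in (0:ℝ)..1, (K1 x * e x - J2 x * e x + (K2 x * e x - J1 x * e x)) := by
      rw [z, add_zero]
    rw [z', ← intervalIntegral.integral_const_mul,
      ← intervalIntegral.integral_add, ← intervalIntegral.integral_sub]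
    · congr 1; ext x
      rw [t1, t2, hQ0']
      simp only [R]
      ring
    all_goals exact Continuous.intervalIntegrable (by fun_prop) _ _
  rw [hLHS, hRHS, hO, hO']
  have hO2' : O2 ≠ 0 := hO2.ne
  have hζ' : ζ * e 1 ^ 2 = -(Q5 * e 1 ^ 2 + Q7 * e 1 * E1 1) := by
    rw [hζdef, he1]; field_simp
  rw [hζ', hQ5, hQ7, (ha1 1).deriv, (hN1 1).deriv]
  rw [hQ3def, (ha1 0).deriv, (hN1 0).deriv] at hQ3
  have hQ3' := mul_le_mul_of_nonneg_right hQ3 (sq_nonneg (e 0))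
  have h4' : (2 * (a1 0 - b 0) * u0 0 + 2 * a 0 * u1 0 + π ^ 2 * α * ε1 * ∫ x in (0:ℝ)..1, e x)
    * e 0 = 0 := by rw [h4, zero_mul]
  simp only [Φ, he0] at hFTC
  rw [he1] at hFTC ⊢
  generalize (∫ x in (0:ℝ)..1, F x) = iF at *
  generalize (∫ x in (0:ℝ)..1, R x) = iR at *
  generalize (∫ x in (0:ℝ)..1, e x ^ 2) = ie2 at *
  generalize (∫ x in (0:ℝ)..1, e x) = ie at *
  linarith [hFTC, hW1, hW4, hQ3', h4']

end
end
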